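/- Every planar graph G contains a matching M such that G − M is 4-choosable: for every assignment of lists of 4 colours to the vertices, G − M has a proper colouring from the lists. -/

import Mathlib

open MvPolynomial Finset

/- The graph polynomial `P_G = ∏_{uv ∈ E(G), u < v} (x_v - x_u)`. -/
open scoped Classical in
noncomputable def graphPoly {V : Type*} [Fintype V] [LinearOrder V]
    (G : SimpleGraph V) : MvPolynomial V ℝ :=
  ∏ p ∈ Finset.univ.filter (fun p : V × V => G.Adj p.1 p.2 ∧ p.1 < p.2),
    (X p.2 - X p.1)

/- The signed graph polynomial `P_{G,σ} = ∏_{uv ∈ E(G), u < v} (x_v - σ(uv)·x_u)`. -/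
open scoped Classical in
noncomputable def signedGraphPoly {V : Type*} [Fintype V] [LinearOrder V]
    (G : SimpleGraph V) (σ : Sym2 V → ℤ) : MvPolynomial V ℤ :=
  ∏ p ∈ Finset.univ.filter (fun p : V × V => G.Adj p.1 p.2 ∧ p.1 < p.2),
    (X p.2 - C (σ s(p.1, p.2)) * X p.1)

/- `H` is a minor of `G`: branch sets. -/
def SimpleGraph.IsMinor {W V : Type*} (H : SimpleGraph W) (G : SimpleGraph V) : Prop :=
  ∃ f : W → Set V,
    (∀ w, (G.induce (f w)).Connected) ∧
    (∀ w₁ w₂, w₁ ≠ w₂ → Disjoint (f w₁) (f w₂)) ∧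
    (∀ w₁ w₂, H.Adj w₁ w₂ → ∃ v₁ ∈ f w₁, ∃ v₂ ∈ f w₂, G.Adj v₁ v₂)

/- A graph is planar iff it has no `K₅` and no `K₃,₃` minor (Wagner's theorem). -/
def SimpleGraph.IsPlanar {V : Type*} (G : SimpleGraph V) : Prop :=
  ¬ SimpleGraph.IsMinor (completeGraph (Fin 5)) G ∧
  ¬ SimpleGraph.IsMinor (completeBipartiteGraph (Fin 3) (Fin 3)) G

/-!
In characteristic two `edgePoly F (G \ M)` is the graph polynomial of `G - M`, so by the
Combinatorial Nullstellensatz it is enough to find a matching `M` and a monomial of this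
polynomial all of whose exponents are at most three.

A stronger claim allows induction on a vertex set `S` that lies outside a connected set `Z`. The
vertices of `S` with a neighbour in `Z` form the boundary; their exponents are at most two, and at
most one if `M` covers them. Moreover `M` avoids a prescribed clique `R` of boundary vertices, the
roots, whose exponents are zero and whose own edges are left out.

* If two adjacent boundary vertices separate `S`, the monomials of the two sides are multiplied.
* Otherwise a boundary vertex has at most two boundary neighbours: with three, a path argument gives
  a `K₃,₃` or `K₅` minor. Then a boundary vertex `v` next to a root, or the root itself, is moved
  from `S` to `Z`. Its inner neighbours become boundary vertices, so they can take the exponents of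
  their edges to `v`, and `v` takes the exponents of its edges to the boundary. If the coefficient
  of the resulting monomial vanishes, the cancelling term comes from an inner neighbour `j` of `v`,
  and either a different monomial works or the edge `jv` can be added to `M`.
-/

section Coefficients

variable {V F : Type*} [CommSemiring F] {Q : MvPolynomial V F} {d : V →₀ ℕ} {x : V}

lemma sum_single_one_apply [DecidableEq V] (U : Finset V) (a : V) :
    (∑ u ∈ U, Finsupp.single u 1 : V →₀ ℕ) a = if a ∈ U then 1 else 0 := by
  simp [Finsupp.finsetSum_apply, Finsupp.single_apply]

lemma coeff_add_single_mul_X_add_X {u : V} (hux : u ≠ x) (hx : d x = 0) :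
    coeff (d + Finsupp.single u 1) (Q * (X u + X x)) = coeff d Q := by
  classical
  rw [mul_add, coeff_add, coeff_mul_X, coeff_mul_X', if_neg, add_zero]
  simp [hx, hux]

lemma coeff_add_sum_single_mul_star {U : Finset V} (hxU : x ∉ U) (hx : d x = 0) :
    coeff (d + ∑ u ∈ U, Finsupp.single u 1) (Q * ∏ u ∈ U, (X u + X x)) = coeff d Q := by
  classical
  induction U using Finset.induction_on with
  | empty => simp
  | insert a U ha ih =>
    obtain ⟨hxa, hxU⟩ : x ≠ a ∧ x ∉ U := by simpa using hxU
    rw [sum_insert ha, prod_insert ha, mul_comm (X a + X x), ← mul_assoc,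
      add_comm (Finsupp.single a 1), ← add_assoc, coeff_add_single_mul_X_add_X hxa.symm, ih hxU]
    rw [Finsupp.add_apply, sum_single_one_apply, hx, if_neg hxU]

lemma coeff_add_single_card_mul_star {K : Finset V} (hxK : x ∉ K) (hd : ∀ k ∈ K, d k = 0) :
    coeff (d + Finsupp.single x #K) (Q * ∏ k ∈ K, (X k + X x)) = coeff d Q := by
  induction K using Finset.cons_induction with
  | empty => simp
  | cons a K ha ih =>
    obtain ⟨hxa, hxK⟩ : x ≠ a ∧ x ∉ K := by simpa using hxK
    rw [card_cons, prod_cons, mul_comm (X a + X x), ← mul_assoc, Finsupp.single_add,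
      ← add_assoc, add_comm (X a), coeff_add_single_mul_X_add_X hxa,
      ih hxK fun k hk => hd k (mem_cons_of_mem hk)]
    simp [hd a (mem_cons_self a K), hxa]

lemma coeff_add_sum_single_add_single_card_mul_star [DecidableEq V] {U K : Finset V} (hxU : x ∉ U)
    (hxK : x ∉ K) (hUK : Disjoint U K) (hx : d x = 0) (hd : ∀ k ∈ K, d k = 0) :
    coeff (d + ∑ u ∈ U, Finsupp.single u 1 + Finsupp.single x #K)
      (Q * ∏ u ∈ U ∪ K, (X u + X x)) = coeff d Q := by
  rw [prod_union hUK, ← mul_assoc, coeff_add_single_card_mul_star hxK,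
    coeff_add_sum_single_mul_star hxU hx]
  intro k hk
  rw [Finsupp.add_apply, sum_single_one_apply, hd k hk, if_neg (disjoint_right.1 hUK hk)]

lemma exists_coeff_add_single_ne_zero_of_star {U : Finset V} (hxU : x ∉ U) (hx : d x = 0)
    (hQ : x ∉ Q.vars)
    (h : coeff (d + Finsupp.single x 1 + ∑ u ∈ U, Finsupp.single u 1)
      (Q * ∏ u ∈ U, (X u + X x)) ≠ 0) :
    ∃ j ∈ U, coeff (d + Finsupp.single j 1) Q ≠ 0 := by
  classical
  induction U using Finset.induction_on with
  | empty =>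
    exact absurd (mem_support_notMem_vars_zero (x := d + Finsupp.single x 1)
      (mem_support_iff.2 (by simpa using h)) hQ) (by simp)
  | insert a U ha ih =>
    obtain ⟨hxa, hxU⟩ : x ≠ a ∧ x ∉ U := by simpa using hxU
    have hstar : coeff (d + Finsupp.single a 1 + ∑ u ∈ U, Finsupp.single u 1)
        (Q * ∏ u ∈ U, (X u + X x)) = coeff (d + Finsupp.single a 1) Q :=
      coeff_add_sum_single_mul_star hxU (by simp [hx, hxa])
    have take_leaf : d + Finsupp.single x 1 +
        (Finsupp.single a 1 + ∑ u ∈ U, Finsupp.single u 1) =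
        d + Finsupp.single x 1 + ∑ u ∈ U, Finsupp.single u 1 + Finsupp.single a 1 := by abel
    have take_centre : d + Finsupp.single x 1 + ∑ u ∈ U, Finsupp.single u 1 +
        Finsupp.single a 1 =
        d + Finsupp.single a 1 + ∑ u ∈ U, Finsupp.single u 1 + Finsupp.single x 1 := by abel
    rw [sum_insert ha, prod_insert ha, mul_comm (X a + X x), ← mul_assoc, mul_add, coeff_add,
      take_leaf, coeff_mul_X, take_centre, coeff_mul_X, hstar] at h
    by_cases hc : coeff (d + Finsupp.single a 1) Q = 0
    · obtain ⟨j, hj, hj'⟩ := ih hxU (by simpa [hc] using h)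
      exact ⟨j, mem_insert_of_mem hj, hj'⟩
    · exact ⟨a, mem_insert_self a U, hc⟩

/-- If the coefficient vanishes, the term choosing `X w` in the last factor must cancel the
term `coeff d Q` choosing `X x`, so some other leaf `j` takes over from `w`. -/
lemma coeff_star_ne_zero_or_exists_swap {U : Finset V} {w : V} (hxU : x ∉ U) (hwU : w ∉ U)
    (hxw : x ≠ w) (hQ : x ∉ Q.vars) (hd : coeff d Q ≠ 0) :
    coeff (d + Finsupp.single x 1 + ∑ u ∈ U, Finsupp.single u 1)
      (Q * ((∏ u ∈ U, (X u + X x)) * (X w + X x))) ≠ 0 ∨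
    ∃ j ∈ U, ∃ d', d = d' + Finsupp.single w 1 ∧ coeff (d' + Finsupp.single j 1) Q ≠ 0 := by
  classical
  have hx : d x = 0 := mem_support_notMem_vars_zero (mem_support_iff.2 hd) hQ
  rw [or_iff_not_imp_left, not_not, add_right_comm, ← mul_assoc, mul_add, coeff_add, coeff_mul_X,
    coeff_add_sum_single_mul_star hxU hx, coeff_mul_X']
  split_ifs with hw
  · intro hcancel
    obtain ⟨d', rfl⟩ : ∃ d', d = d' + Finsupp.single w 1 := by
      refine le_iff_exists_add'.1 (Finsupp.single_le_iff.2 (Nat.one_le_iff_ne_zero.2 ?_))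
      rw [Finsupp.mem_support_iff, Finsupp.add_apply, Finsupp.add_apply, sum_single_one_apply,
        if_neg hwU, Finsupp.single_eq_of_ne hxw.symm] at hw
      exact hw
    have hexp : d' + Finsupp.single w 1 + ∑ u ∈ U, Finsupp.single u 1 + Finsupp.single x 1
        = d' + Finsupp.single x 1 + ∑ u ∈ U, Finsupp.single u 1 + Finsupp.single w 1 := by abel
    rw [hexp, add_tsub_cancel_right] at hcancel
    have hd'x : d' x = 0 := by simpa [hxw] using hx
    obtain ⟨j, hj, hj'⟩ := exists_coeff_add_single_ne_zero_of_star hxU hd'x hQ fun h =>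
      hd (by simpa [h] using hcancel)
    exact ⟨j, hj, d', rfl, hj'⟩
  · exact fun h => absurd (by simpa using h) hd

lemma coeff_add_mul_of_disjoint {P : MvPolynomial V F} {e : V →₀ ℕ}
    (hQ : Q.IsHomogeneous e.degree) (hP : Disjoint P.vars e.support)
    (hd : Disjoint d.support e.support) :
    coeff (d + e) (P * Q) = coeff d P * coeff e Q := by
  classical
  rw [coeff_mul, sum_eq_single (d, e)]
  · rintro ⟨p, q⟩ hpq hne
    rw [HasAntidiagonal.mem_antidiagonal] at hpq
    by_contra hc
    have hdeg : q.degree = e.degree :=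
      (hQ.degree_eq_sum_deg_support (mem_support_iff.2 (right_ne_zero_of_mul hc))).symm
    have hle : e ≤ q := fun a => by
      by_cases ha : a ∈ e.support
      · have hpa : p a = 0 := mem_support_notMem_vars_zero
          (mem_support_iff.2 (left_ne_zero_of_mul hc)) (disjoint_right.1 hP ha)
        have hda : d a = 0 := Finsupp.notMem_support_iff.1 (disjoint_right.1 hd ha)
        have := DFunLike.congr_fun hpq a
        simp only [Finsupp.add_apply, hpa, hda] at this
        lia
      · simp [Finsupp.notMem_support_iff.1 ha]
    obtain ⟨r, rfl⟩ := exists_add_of_le hle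
    obtain rfl : r = 0 := by
      rw [← Finsupp.degree_eq_zero_iff]
      simpa using hdeg
    exact hne (by simpa using hpq)
  · simp

end Coefficients

section EdgePoly

variable {V : Type*} (F : Type*) [CommSemiring F]

/-- The product of `X a + X b` over the edges `ab` of a finite graph `H`. With plus signs no
orientation of the edges is needed, and in characteristic two this is the graph polynomial
of `H`. -/
noncomputable def edgePoly (H : SimpleGraph V) : MvPolynomial V F :=
  ∏ᶠ e ∈ H.edgeSet, Sym2.lift ⟨fun a b => X a + X b, fun _ _ => add_comm _ _⟩ e

@[simp]
lemma edgePoly_bot : edgePoly F (⊥ : SimpleGraph V) = 1 := by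
  simp [edgePoly]

lemma vars_edgePoly_subset (H : SimpleGraph V) : ((edgePoly F H).vars : Set V) ⊆ H.support := by
  classical
  cases subsingleton_or_nontrivial F
  · simp [Subsingleton.elim (edgePoly F H) 0]
  refine finprod_mem_induction (fun p : MvPolynomial V F => (p.vars : Set V) ⊆ H.support) (by simp)
    (fun p q hp hq a ha => (mem_union.1 (vars_mul p q ha)).elim (@hp a) (@hq a)) fun e he a ha => ?_
  induction e with
  | _ u v =>
    obtain rfl | rfl : a = u ∨ a = v := by
      simpa using vars_add_subset (X u : MvPolynomial V F) (X v) ha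
    exacts [⟨v, he⟩, ⟨u, he.symm⟩]

variable [Finite V]

lemma edgePoly_sup {H₁ H₂ : SimpleGraph V} (h : Disjoint H₁ H₂) :
    edgePoly F (H₁ ⊔ H₂) = edgePoly F H₁ * edgePoly F H₂ := by
  rw [edgePoly, SimpleGraph.edgeSet_sup]
  exact finprod_mem_union (SimpleGraph.disjoint_edgeSet.2 h) (Set.toFinite _) (Set.toFinite _)

lemma isHomogeneous_edgePoly (H : SimpleGraph V) :
    (edgePoly F H).IsHomogeneous H.edgeSet.ncard := by
  rw [edgePoly, finprod_mem_eq_finite_toFinset_prod _ H.edgeSet.toFinite,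
    Set.ncard_eq_toFinset_card _, card_eq_sum_ones]
  refine IsHomogeneous.prod _ _ _ fun e _ => ?_
  induction e with
  | _ a b => exact (isHomogeneous_X F a).add (isHomogeneous_X F b)

lemma edgePoly_eq_mul_star {H : SimpleGraph V} {x : V} {N : Finset V}
    (hN : ∀ u, u ∈ N ↔ H.Adj x u) :
    edgePoly F H = edgePoly F (H.deleteIncidenceSet x) * ∏ u ∈ N, (X u + X x) := by
  classical
  have hinj : Set.InjOn (fun u => s(u, x)) (N : Set V) := fun _ _ _ _ h => Sym2.congr_left.1 h
  have hstar : H.incidenceSet x = (fun u => s(u, x)) '' (N : Set V) := by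
    ext e
    induction e with
    | _ a b =>
      simp only [SimpleGraph.mk'_mem_incidenceSet_iff, Set.mem_image, mem_coe, hN]
      grind [SimpleGraph.adj_comm, Sym2.eq_iff]
  rw [edgePoly, ← Set.sdiff_union_of_subset (H.incidenceSet_subset x),
    finprod_mem_union Set.disjoint_sdiff_left (Set.toFinite _) (Set.toFinite _),
    ← H.edgeSet_deleteIncidenceSet x, hstar, finprod_mem_image hinj, ← finprod_mem_coe_finset]
  rfl

lemma map_edgePoly {F' : Type*} [CommSemiring F'] (f : F →+* F') (H : SimpleGraph V) :
    map f (edgePoly F H) = edgePoly F' H := by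
  rw [edgePoly, edgePoly, finprod_mem_eq_finite_toFinset_prod _ H.edgeSet.toFinite,
    finprod_mem_eq_finite_toFinset_prod _ H.edgeSet.toFinite, map_prod]
  refine prod_congr rfl fun e _ => ?_
  induction e with
  | _ a b => simp

end EdgePoly

section Choosability

variable {V α F : Type*} [Finite V] [CommRing F] [CharP F 2] {H : SimpleGraph V}

lemma eval_edgePoly_eq_zero {s : V → F} {a b : V} (hab : H.Adj a b) (hs : s a = s b) :
    eval s (edgePoly F H) = 0 := by
  rw [edgePoly, finprod_mem_eq_finite_toFinset_prod _ H.edgeSet.toFinite, map_prod]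
  refine prod_eq_zero (i := s(a, b)) (by simpa using hab) ?_
  simp [hs, CharTwo.add_self_eq_zero]

lemma exists_coloring_of_coeff_edgePoly_ne_zero [IsDomain F] {d : V →₀ ℕ}
    (hd : coeff d (edgePoly F H) ≠ 0)
    (L : V → Finset α) (hL : ∀ v, d v < #(L v)) : ∃ φ : H.Coloring α, ∀ v, φ v ∈ L v := by
  have hcoeff : coeff d (edgePoly (MvPolynomial α F) H) ≠ 0 := by
    rw [← map_edgePoly F (C : F →+* MvPolynomial α F), coeff_map]
    simpa using hd
  have hdeg : (edgePoly (MvPolynomial α F) H).totalDegree = d.degree := by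
    have hhom := isHomogeneous_edgePoly (MvPolynomial α F) H
    rw [hhom.totalDegree (ne_zero_iff.2 ⟨d, hcoeff⟩)]
    exact (not_imp_comm.1 hhom.coeff_eq_zero hcoeff).symm
  obtain ⟨s, hs, heval⟩ := combinatorial_nullstellensatz_exists_eval_nonzero _ d hcoeff hdeg
    (fun v => (L v).map ⟨X, X_injective⟩) (by simpa using hL)
  choose φ hφL hφs using fun v => mem_map.1 (hs v)
  refine ⟨SimpleGraph.Coloring.mk φ fun {a b} hab hφ => heval ?_, hφL⟩
  exact eval_edgePoly_eq_zero hab (by rw [← hφs, ← hφs, hφ])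

end Choosability

section Nice

variable {V F : Type*} [CommSemiring F] {H M : SimpleGraph V} {B R : Set V} {d : V →₀ ℕ}

/-- The monomial `x ^ d` occurs in `edgePoly F (H \ M)`, where `M` is a matching of `H`, and its
exponents are small in the sense of an Alon–Tarsi argument that extends a colouring over the
interior of a plane graph: the vertices of `B` form the boundary, and those of `R` are the
roots, already coloured by the outside. -/
structure IsNice (F : Type*) [CommSemiring F] (H M : SimpleGraph V) (B R : Set V)
    (d : V →₀ ℕ) : Prop where
  le : M ≤ H
  matching ⦃a b c : V⦄ : M.Adj a b → M.Adj a c → b = c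
  root_notMem_support ⦃a : V⦄ : a ∈ R → a ∉ M.support
  coeff_ne_zero : coeff d (edgePoly F (H \ M)) ≠ 0
  root_eq_zero ⦃a : V⦄ : a ∈ R → d a = 0
  boundary_le_two ⦃a : V⦄ : a ∈ B → d a ≤ 2
  boundary_covered_le_one ⦃a : V⦄ : a ∈ B → a ∈ M.support → d a ≤ 1
  le_three (a : V) : d a ≤ 3

/-- Some matching of `H` and some exponent are nice for the boundary `B` and the roots `R`. -/
def HasNice (F : Type*) [CommSemiring F] (H : SimpleGraph V) (B R : Set V) : Prop :=
  ∃ M d, IsNice F H M B R d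

lemma hasNice_bot [Nontrivial F] : HasNice F (⊥ : SimpleGraph V) B R :=
  ⟨⊥, 0, by simp, by simp, by simp, by simp, by simp, by simp, by simp, by simp⟩

lemma apply_eq_zero_of_coeff_edgePoly_ne_zero {a : V} (hd : coeff d (edgePoly F H) ≠ 0)
    (ha : a ∉ H.support) : d a = 0 :=
  mem_support_notMem_vars_zero (mem_support_iff.2 hd) fun hmem => ha (vars_edgePoly_subset F H hmem)

lemma notMem_support_deleteIncidenceSet {v : V} : v ∉ (H.deleteIncidenceSet v).support :=
  fun h => (H.support_deleteIncidenceSet_subset v h).2 rfl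

lemma deleteIncidenceSet_eq_self {v : V} (hv : v ∉ H.support) : H.deleteIncidenceSet v = H :=
  le_antisymm (H.deleteIncidenceSet_le v) fun a b hab => SimpleGraph.deleteIncidenceSet_adj.2
    ⟨hab, fun hav => hv (hav ▸ H.mem_support.2 ⟨b, hab⟩),
      fun hbv => hv (hbv ▸ H.mem_support.2 ⟨a, hab.symm⟩)⟩

namespace IsNice

lemma notMem_support {v : V} (h : IsNice F (H.deleteIncidenceSet v) M B R d) : v ∉ M.support :=
  fun hv => notMem_support_deleteIncidenceSet (SimpleGraph.support_mono h.le hv)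

lemma sdiff_adj {u v : V} (h : IsNice F (H.deleteIncidenceSet v) M B R d) :
    (H \ M).Adj v u ↔ H.Adj v u := by
  rw [SimpleGraph.sdiff_adj, and_iff_left_iff_imp]
  exact fun _ hM => h.notMem_support (M.mem_support.2 ⟨u, hM⟩)

lemma extend [Finite V] {B' : Set V} {M' : SimpleGraph V} {f : V →₀ ℕ} {v : V} {N : Finset V}
    (h : IsNice F (H.deleteIncidenceSet v) M B' (R \ {v}) d) (hRB : R ⊆ B) (hB : B \ {v} ⊆ B')
    (hM'H : M' ≤ H) (hM' : M'.deleteIncidenceSet v = M)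
    (hmatching : ∀ ⦃a b c⦄, M'.Adj a b → M'.Adj a c → b = c)
    (hvM' : ∀ a, M'.Adj v a → v ∉ R ∧ a ∉ B ∧ f v ≤ 1)
    (hN : ∀ u, u ∈ N ↔ (H \ M').Adj v u)
    (hc : coeff f (edgePoly F (H.deleteIncidenceSet v \ M) * ∏ u ∈ N, (X u + X v)) ≠ 0)
    (hvR : v ∈ R → f v = 0) (hv : f v ≤ 2)
    (hf : ∀ a, a ≠ v → f a ≤ d a ∨ a ∉ B ∧ f a ≤ 3) :
    IsNice F H M' B R f := by
  have mem_support_of_mem {a : V} (hav : a ≠ v) (haB : a ∈ B) (ha : a ∈ M'.support) :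
      a ∈ M.support := by
    obtain ⟨b, hab⟩ := M'.mem_support.1 ha
    refine M.mem_support.2 ⟨b, ?_⟩
    rw [← hM', SimpleGraph.deleteIncidenceSet_adj]
    refine ⟨hab, hav, ?_⟩
    rintro rfl
    exact (hvM' a hab.symm).2.1 haB
  have le_of_mem {a : V} (hav : a ≠ v) (haB : a ∈ B) : f a ≤ d a :=
    (hf a hav).resolve_right fun h => h.1 haB
  have hdelete : (H \ M').deleteIncidenceSet v = H.deleteIncidenceSet v \ M := by
    ext a b
    simp only [← hM', SimpleGraph.deleteIncidenceSet_adj, SimpleGraph.sdiff_adj]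
    tauto
  refine ⟨hM'H, hmatching, fun a ha hmem => ?_, ?_, fun a ha => ?_, fun a ha => ?_,
    fun a ha hmem => ?_, fun a => ?_⟩
  · rcases eq_or_ne a v with rfl | hav
    · obtain ⟨b, hab⟩ := hmem
      exact (hvM' b hab).1 ha
    · exact h.root_notMem_support ⟨ha, hav⟩ (mem_support_of_mem hav (hRB ha) hmem)
  · rwa [edgePoly_eq_mul_star F hN, hdelete]
  · rcases eq_or_ne a v with rfl | hav
    · exact hvR ha
    · exact Nat.le_zero.1 ((le_of_mem hav (hRB ha)).trans_eq (h.root_eq_zero ⟨ha, hav⟩))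
  · rcases eq_or_ne a v with rfl | hav
    · exact hv
    · exact (le_of_mem hav ha).trans (h.boundary_le_two (hB ⟨ha, hav⟩))
  · rcases eq_or_ne a v with rfl | hav
    · obtain ⟨b, hab⟩ := hmem
      exact (hvM' b hab).2.2
    · exact (le_of_mem hav ha).trans
        (h.boundary_covered_le_one (hB ⟨ha, hav⟩) (mem_support_of_mem hav ha hmem))
  · rcases eq_or_ne a v with rfl | hav
    · exact hv.trans (by decide)
    · exact (hf a hav).elim (·.trans (h.le_three a)) And.right

lemma extend_star [Finite V] [DecidableEq V] {B' : Set V} {M' : SimpleGraph V} {p : V →₀ ℕ} {v : V}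
    {U K : Finset V} (h : IsNice F (H.deleteIncidenceSet v) M B' (R \ {v}) d) (hRB : R ⊆ B)
    (hB : B \ {v} ⊆ B') (hM'H : M' ≤ H) (hM' : M'.deleteIncidenceSet v = M)
    (hmatching : ∀ ⦃a b c⦄, M'.Adj a b → M'.Adj a c → b = c)
    (hvM' : ∀ a, M'.Adj v a → v ∉ R ∧ a ∉ B ∧ #K ≤ 1)
    (hN : ∀ u, u ∈ U ∪ K ↔ (H \ M').Adj v u)
    (hp : coeff p (edgePoly F (H.deleteIncidenceSet v \ M)) ≠ 0)
    (hK : ∀ u ∈ K, u ∈ R) (hvK : v ∈ R → K = ∅) (hcard : #K ≤ 2)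
    (hpU : ∀ u ∈ U, p u < d u ∨ u ∉ B ∧ p u ≤ 2)
    (hpd : ∀ u ∉ U, p u ≤ d u ∨ u ∉ B ∧ p u ≤ 3) :
    IsNice F H M' B R (p + ∑ u ∈ U, Finsupp.single u 1 + Finsupp.single v #K) := by
  have ne_v {u : V} (hu : u ∈ U ∪ K) : u ≠ v := by
    rintro rfl
    exact ((hN u).1 hu).ne rfl
  have hvU : v ∉ U := fun hv => ne_v (mem_union_left K hv) rfl
  have hvK' : v ∉ K := fun hv => ne_v (mem_union_right U hv) rfl
  have hdK {k : V} (hk : k ∈ K) : d k = 0 := h.root_eq_zero ⟨hK k hk, ne_v (mem_union_right U hk)⟩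
  have hUK : Disjoint U K := disjoint_right.2 fun k hk hkU =>
    (hpU k hkU).elim (fun hlt => absurd (hdK hk) hlt.ne_bot) fun hkB => hkB.1 (hRB (hK k hk))
  have hpK : ∀ k ∈ K, p k = 0 := fun k hk =>
    (hpd k (disjoint_right.1 hUK hk)).elim (fun hle => Nat.le_zero.1 (hle.trans_eq (hdK hk)))
      fun hkB => absurd (hRB (hK k hk)) hkB.1
  have hpv : p v = 0 := apply_eq_zero_of_coeff_edgePoly_ne_zero hp fun hv =>
    notMem_support_deleteIncidenceSet (SimpleGraph.support_mono sdiff_le hv)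
  set f := p + ∑ u ∈ U, Finsupp.single u 1 + Finsupp.single v #K with hf
  have hfv : f v = #K := by
    rw [hf, Finsupp.add_apply, Finsupp.add_apply, sum_single_one_apply, hpv, if_neg hvU,
      Finsupp.single_eq_same, zero_add, zero_add]
  refine h.extend hRB hB hM'H hM' hmatching (by rwa [hfv]) hN ?_ (by simpa [hfv] using hvK)
    (hfv.trans_le hcard) fun a hav => ?_
  · rwa [coeff_add_sum_single_add_single_card_mul_star hvU hvK' hUK hpv hpK]
  · rw [hf, Finsupp.add_apply, Finsupp.add_apply, sum_single_one_apply,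
      Finsupp.single_eq_of_ne hav, add_zero]
    split_ifs with haU
    · exact (hpU a haU).imp id (And.imp_right Nat.succ_le_succ)
    · exact hpd a haU

end IsNice

lemma HasNice.of_deleteIncidenceSet [Finite V] {B' : Set V} {v : V} {U K : Finset V}
    (h : HasNice F (H.deleteIncidenceSet v) B' (R \ {v})) (hRB : R ⊆ B) (hB : B \ {v} ⊆ B')
    (hN : ∀ u, H.Adj v u ↔ u ∈ U ∨ u ∈ K) (hU : ∀ u ∈ U, u ∉ B ∧ u ∈ B')
    (hK : ∀ u ∈ K, u ∈ R) (hvK : v ∈ R → K = ∅) (hcard : #K ≤ 2) :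
    HasNice F H B R := by
  classical
  obtain ⟨M, d, h⟩ := h
  refine ⟨M, _, h.extend_star (p := d) (U := U) (K := K) hRB hB
    (h.le.trans (H.deleteIncidenceSet_le v)) (deleteIncidenceSet_eq_self h.notMem_support)
    h.matching (fun a ha => absurd (M.mem_support.2 ⟨a, ha⟩) h.notMem_support) (fun u => ?_)
    h.coeff_ne_zero hK hvK hcard (fun u hu => ?_) fun u _ => .inl le_rfl⟩
  · rw [h.sdiff_adj, hN, mem_union]
  · exact .inr ⟨(hU u hu).1, h.boundary_le_two (hU u hu).2⟩

lemma deleteIncidenceSet_sup_edge {j v : V} (hv : v ∉ M.support) :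
    (M ⊔ SimpleGraph.edge j v).deleteIncidenceSet v = M := by
  ext a b
  grind [SimpleGraph.deleteIncidenceSet_adj, SimpleGraph.mem_support, SimpleGraph.adj_comm]

lemma eq_of_adj_sup_edge {j v : V} (hM : ∀ ⦃a b c⦄, M.Adj a b → M.Adj a c → b = c)
    (hj : j ∉ M.support) (hv : v ∉ M.support) ⦃a b c : V⦄
    (hab : (M ⊔ SimpleGraph.edge j v).Adj a b) (hac : (M ⊔ SimpleGraph.edge j v).Adj a c) :
    b = c := by
  grind [SimpleGraph.mem_support, SimpleGraph.adj_comm]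

/-- If `j` is not covered by the matching, its exponent may be too large for the edge `jv` to
be kept, and this edge joins the matching. -/
lemma IsNice.hasNice_of_swap [Finite V] {B' : Set V} {v w x j : V} {U : Finset V}
    (h : IsNice F (H.deleteIncidenceSet v) M B' (R \ {v}) (d + Finsupp.single w 1))
    (hRB : R ⊆ B) (hB : B \ {v} ⊆ B') (hN : ∀ u, H.Adj v u ↔ u = x ∨ u = w ∨ u ∈ U)
    (hU : ∀ u ∈ U, u ∉ B ∧ u ∈ B') (hx : x ∈ R) (hwB : w ∈ B) (hv : v ∉ R) (hj : j ∈ U)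
    (hc : coeff (d + Finsupp.single j 1) (edgePoly F (H.deleteIncidenceSet v \ M)) ≠ 0) :
    HasNice F H B R := by
  classical
  have hjw : j ≠ w := by rintro rfl; exact (hU j hj).1 hwB
  have hjx : j ≠ x := by rintro rfl; exact (hU j hj).1 (hRB hx)
  have hjv : H.Adj j v := ((hN j).2 (.inr (.inr hj))).symm
  have hvM := h.notMem_support
  have hMH := h.le.trans (H.deleteIncidenceSet_le v)
  have hdU (u) (hu : u ∈ U) : (d + Finsupp.single w 1 : V →₀ ℕ) u ≤ 2 :=
    h.boundary_le_two (hU u hu).2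
  have hroot : ∀ u ∈ ({x} : Finset V), u ∈ R := by simpa using hx
  by_cases hjM : j ∈ M.support
  · have hdj := h.boundary_covered_le_one (hU j hj).2 hjM
    refine ⟨M, _, h.extend_star (U := insert w U) (K := {x}) hRB hB hMH
      (deleteIncidenceSet_eq_self hvM) h.matching
      (fun a ha => absurd (M.mem_support.2 ⟨a, ha⟩) hvM) (fun u => ?_)
      hc hroot (fun hv' => absurd hv' hv) (by simp) (fun u hu => ?_) fun u hu => ?_⟩
    · rw [h.sdiff_adj, hN]
      grind
    all_goals grind [Finsupp.add_apply]
  · refine ⟨M ⊔ SimpleGraph.edge j v, _, h.extend_star (U := insert w (U.erase j)) (K := {x})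
      hRB hB (sup_le hMH ((SimpleGraph.edge_le_iff H).2 (.inr hjv)))
      (deleteIncidenceSet_sup_edge hvM) (eq_of_adj_sup_edge h.matching hjM hvM)
      ?_ (fun u => ?_) hc hroot (fun hv' => absurd hv' hv) (by simp)
      (fun u hu => ?_) fun u hu => ?_⟩
    · grind [SimpleGraph.mem_support]
    · grind [SimpleGraph.sdiff_adj, SimpleGraph.mem_support, SimpleGraph.Adj.ne]
    all_goals grind [Finsupp.add_apply]

lemma HasNice.of_deleteIncidenceSet_of_root [Finite V] {B' : Set V} {v w x : V} {U : Finset V}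
    (h : HasNice F (H.deleteIncidenceSet v) B' (R \ {v})) (hRB : R ⊆ B) (hB : B \ {v} ⊆ B')
    (hN : ∀ u, H.Adj v u ↔ u = x ∨ u = w ∨ u ∈ U) (hU : ∀ u ∈ U, u ∉ B ∧ u ∈ B')
    (hx : x ∈ R) (hwB : w ∈ B) (hwR : w ∉ R) (hv : v ∉ R) :
    HasNice F H B R := by
  classical
  obtain ⟨M, d, h⟩ := h
  have hN' (u : V) : u ∈ insert x (insert w U) ↔ (H \ M).Adj v u := by
    rw [h.sdiff_adj, hN, mem_insert, mem_insert]
  have hvw : v ≠ w := ((hN w).2 (.inr (.inl rfl))).ne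
  have hvx : v ≠ x := ((hN x).2 (.inl rfl)).ne
  have hvU : v ∉ U := fun hvU => ((hN v).2 (.inr (.inr hvU))).ne rfl
  have hwU : w ∉ U := fun hw => (hU w hw).1 hwB
  have hxU : x ∉ U := fun hx' => (hU x hx').1 (hRB hx)
  have hxw : x ≠ w := by rintro rfl; exact hwR hx
  have hv_support : v ∉ (H.deleteIncidenceSet v \ M).support := fun hmem =>
    notMem_support_deleteIncidenceSet (SimpleGraph.support_mono sdiff_le hmem)
  have hdv : d v = 0 := apply_eq_zero_of_coeff_edgePoly_ne_zero h.coeff_ne_zero hv_support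
  rcases coeff_star_ne_zero_or_exists_swap hvU hwU hvw
      (fun hmem => hv_support (vars_edgePoly_subset F _ hmem)) h.coeff_ne_zero with
    hc | ⟨j, hj, d', rfl, hc⟩
  · set f : V →₀ ℕ := d + Finsupp.single v 1 + ∑ u ∈ U, Finsupp.single u 1 + Finsupp.single v 1
      with hf_def
    have hf (a : V) : f a = d a + (if a = v then 2 else 0) + if a ∈ U then 1 else 0 := by
      rw [hf_def, Finsupp.add_apply, Finsupp.add_apply, Finsupp.add_apply, sum_single_one_apply]
      grind
    refine ⟨M, f, h.extend hRB hB (h.le.trans (H.deleteIncidenceSet_le v))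
      (deleteIncidenceSet_eq_self h.notMem_support) h.matching
      (fun a ha => absurd (M.mem_support.2 ⟨a, ha⟩) h.notMem_support) hN' ?_
      (fun h => absurd h hv) ?_ ?_⟩
    · rw [prod_insert (by simp [hxU, hxw]), prod_insert hwU, mul_comm (X x + X v), ← mul_assoc,
        mul_comm (X w + X v), add_comm (X x), coeff_add_single_mul_X_add_X hvx]
      · exact hc
      · simp only [Finsupp.add_apply, sum_single_one_apply, h.root_eq_zero ⟨hx, hvx.symm⟩,
          Finsupp.single_eq_of_ne hvx.symm, if_neg hxU, add_zero]
    · rw [hf, hdv, if_pos rfl, if_neg hvU]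
    · intro a hav
      rw [hf, if_neg hav]
      split_ifs with haU
      · exact .inr ⟨(hU a haU).1, Nat.succ_le_succ (h.boundary_le_two (hU a haU).2)⟩
      · exact .inl le_rfl
  · exact h.hasNice_of_swap hRB hB hN hU hx hwB hv hj hc

lemma HasNice.mono_roots {R' : Set V} (h : HasNice F H B R) (hR : R' ⊆ R) : HasNice F H B R' := by
  obtain ⟨M, d, h⟩ := h
  exact ⟨M, d, { h with
    root_notMem_support := fun a ha => h.root_notMem_support (hR ha)
    root_eq_zero := fun a ha => h.root_eq_zero (hR ha) }⟩

namespace IsNice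

variable {H₁ H₂ M₁ M₂ : SimpleGraph V} {B₁ B₂ R₁ R₂ : Set V} {d₁ d₂ : V →₀ ℕ}

lemma apply_eq_zero {a : V} (h : IsNice F H M B R d) (ha : a ∉ H.support) : d a = 0 :=
  apply_eq_zero_of_coeff_edgePoly_ne_zero h.coeff_ne_zero fun hmem =>
    ha (SimpleGraph.support_mono sdiff_le hmem)

lemma apply_eq_zero_and_notMem_support {a : V} (h : IsNice F H M B R d)
    (ha : a ∉ H.support \ R) : d a = 0 ∧ a ∉ M.support := by
  by_cases haR : a ∈ R
  · exact ⟨h.root_eq_zero haR, h.root_notMem_support haR⟩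
  · have haH : a ∉ H.support := fun haH => ha ⟨haH, haR⟩
    exact ⟨h.apply_eq_zero haH, mt (@SimpleGraph.support_mono _ _ _ h.le a) haH⟩

lemma coeff_add_ne_zero [Finite V] [NoZeroDivisors F] (h₁ : IsNice F H₁ M₁ B₁ R₁ d₁)
    (h₂ : IsNice F H₂ M₂ B₂ R₂ d₂) (hH : Disjoint H₁ H₂) (hR₂ : H₁.support ∩ H₂.support ⊆ R₂) :
    coeff (d₁ + d₂) (edgePoly F ((H₁ ⊔ H₂) \ (M₁ ⊔ M₂))) ≠ 0 := by
  have hsdiff : (H₁ ⊔ H₂) \ (M₁ ⊔ M₂) = H₁ \ M₁ ⊔ H₂ \ M₂ := by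
    rw [sup_sdiff, sdiff_sup, sdiff_sup, (hH.mono_right h₂.le).sdiff_eq_left,
      (hH.symm.mono_right h₁.le).sdiff_eq_left, inf_eq_left.2 sdiff_le, inf_eq_right.2 sdiff_le]
  have notMem_support {a : V} (ha : a ∈ d₂.support) : a ∉ H₁.support := fun ha₁ => by
    have ha₂ : a ∈ H₂.support := not_imp_comm.1 h₂.apply_eq_zero (Finsupp.mem_support_iff.1 ha)
    exact Finsupp.mem_support_iff.1 ha (h₂.root_eq_zero (hR₂ ⟨ha₁, ha₂⟩))
  have hhom := isHomogeneous_edgePoly F (H₂ \ M₂)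
  rw [← not_imp_comm.1 hhom.coeff_eq_zero h₂.coeff_ne_zero] at hhom
  rw [hsdiff, edgePoly_sup F (hH.mono sdiff_le sdiff_le), coeff_add_mul_of_disjoint hhom]
  · exact mul_ne_zero h₁.coeff_ne_zero h₂.coeff_ne_zero
  · exact disjoint_right.2 fun a ha ha₁ => notMem_support ha
      (SimpleGraph.support_mono sdiff_le (vars_edgePoly_subset F _ ha₁))
  · exact disjoint_right.2 fun a ha ha₁ =>
      Finsupp.mem_support_iff.1 ha₁ (h₁.apply_eq_zero (notMem_support ha))

end IsNice

lemma HasNice.sup [Finite V] [NoZeroDivisors F] {H₁ H₂ : SimpleGraph V} {B₁ B₂ R₂ : Set V}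
    (h₁ : HasNice F H₁ B₁ R) (h₂ : HasNice F H₂ B₂ R₂) (hH : Disjoint H₁ H₂)
    (hR₂ : H₁.support ∩ H₂.support ⊆ R₂) (hRR₂ : R ∩ H₂.support ⊆ R₂)
    (hB₁ : B ∩ H₁.support ⊆ B₁) (hB₂ : B ∩ H₂.support ⊆ B₂) :
    HasNice F (H₁ ⊔ H₂) B R := by
  obtain ⟨M₁, d₁, h₁⟩ := h₁
  obtain ⟨M₂, d₂, h₂⟩ := h₂
  have hsupport {a : V} : a ∈ (M₁ ⊔ M₂).support → a ∈ M₁.support ∨ a ∈ M₂.support := by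
    rintro ⟨b, hb | hb⟩
    exacts [.inl ⟨b, hb⟩, .inr ⟨b, hb⟩]
  have only_one_side (a : V) : (d₂ a = 0 ∧ a ∉ M₂.support) ∨
      (d₁ a = 0 ∧ a ∉ M₁.support ∧ a ∉ R ∧ (a ∈ B → a ∈ B₂)) := by
    refine or_iff_not_imp_left.2 fun h => ?_
    obtain ⟨ha₂, haR₂⟩ := not_imp_comm.1 h₂.apply_eq_zero_and_notMem_support h
    have ha₁ := h₁.apply_eq_zero_and_notMem_support fun ha₁ => haR₂ (hR₂ ⟨ha₁.1, ha₂⟩)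
    exact ⟨ha₁.1, ha₁.2, fun haR => haR₂ (hRR₂ ⟨haR, ha₂⟩), fun haB => hB₂ ⟨haB, ha₂⟩⟩
  have hB₁' {a : V} (ha : a ∈ B) : a ∈ B₁ ∨ d₁ a = 0 :=
    (em (a ∈ H₁.support)).imp (fun ha₁ => hB₁ ⟨ha, ha₁⟩) h₁.apply_eq_zero
  refine ⟨M₁ ⊔ M₂, d₁ + d₂, sup_le_sup h₁.le h₂.le, fun a b c hab hac => ?_, fun a ha hmem => ?_,
    h₁.coeff_add_ne_zero h₂ hH hR₂, fun a ha => ?_, fun a ha => ?_, fun a ha hmem => ?_,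
    fun a => ?_⟩
  all_goals have hside := only_one_side a
  · have := @h₁.matching a b c
    have := @h₂.matching a b c
    grind [SimpleGraph.mem_support]
  · have := @h₁.root_notMem_support a
    grind
  · have := @h₁.root_eq_zero a
    grind [Finsupp.add_apply]
  · have := @h₁.boundary_le_two a
    have := @h₂.boundary_le_two a
    grind [Finsupp.add_apply]
  · have := @h₁.boundary_covered_le_one a
    have := @h₂.boundary_covered_le_one a
    grind [Finsupp.add_apply]
  · have := h₁.le_three a
    have := h₂.le_three a
    grind [Finsupp.add_apply]

end Nice

section Linked

variable {V : Type*} {G : SimpleGraph V} {A B C D T Z : Set V} {a b c v : V}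

/-- Some vertex of `C` is adjacent to `v`. -/
def Touches (G : SimpleGraph V) (C : Set V) (v : V) : Prop :=
  ∃ c ∈ C, G.Adj c v

/-- The relation required of the branch sets of adjacent vertices of a minor. -/
def Linked (G : SimpleGraph V) (A B : Set V) : Prop :=
  Disjoint A B ∧ ∃ b ∈ B, Touches G A b

lemma Touches.mono (h : Touches G A v) (hAB : A ⊆ B) : Touches G B v :=
  h.imp fun _ => And.imp_left (@hAB _)

lemma Linked.symm (h : Linked G A B) : Linked G B A :=
  let ⟨hAB, b, hb, a, ha, hab⟩ := h
  ⟨hAB.symm, a, ha, b, hb, hab.symm⟩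

lemma Touches.linked (h : Touches G A b) (hAB : Disjoint A B) (hb : b ∈ B) : Linked G A B :=
  ⟨hAB, b, hb, h⟩

lemma connected_induce_singleton : (G.induce {v}).Connected where
  preconnected := .of_subsingleton

lemma Touches.connected_induce_insert (h : Touches G C v) (hC : (G.induce C).Preconnected) :
    (G.induce (insert v C)).Connected := by
  obtain ⟨c, hc, hcv⟩ := h
  exact SimpleGraph.connected_induce_union connected_induce_singleton.preconnected hC
    (Set.mem_singleton v) hc hcv.symm

lemma isMinor_completeGraph_of_linked {ι : Type*} [LinearOrder ι] (A : ι → Set V)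
    (hA : ∀ i, (G.induce (A i)).Connected) (h : ∀ ⦃i j⦄, i < j → Linked G (A i) (A j)) :
    (SimpleGraph.completeGraph ι).IsMinor G := by
  have : Std.Symm (Linked G) := ⟨fun _ _ => Linked.symm⟩
  have hlinked : Pairwise (Function.onFun (Linked G) A) := (Std.Symm.pairwise_on A).2 h
  exact ⟨A, hA, fun _ _ hij => (hlinked hij).1, fun _ _ hij =>
    (hlinked hij).symm.2.elim fun a ⟨ha, b, hb, hba⟩ => ⟨a, ha, b, hb, hba.symm⟩⟩

lemma isMinor_completeBipartiteGraph_of_touches {ι κ : Type*} (A : ι → Set V) {x : κ → V}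
    (hA : ∀ i, (G.induce (A i)).Connected) (hAA : Pairwise (Function.onFun Disjoint A))
    (hx : Function.Injective x) (hxA : ∀ i j, x j ∉ A i) (h : ∀ i j, Touches G (A i) (x j)) :
    (completeBipartiteGraph ι κ).IsMinor G := by
  refine ⟨Sum.elim A fun j => {x j}, ?_, ?_, ?_⟩
  · rintro (i | j)
    exacts [hA i, connected_induce_singleton]
  · rintro (i | i) (j | j) hij
    · exact hAA (ne_of_apply_ne Sum.inl hij)
    · exact Set.disjoint_singleton_right.2 (hxA i j)
    · exact Set.disjoint_singleton_left.2 (hxA j i)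
    · exact Set.disjoint_singleton.2 (hx.ne (ne_of_apply_ne Sum.inr hij))
  · rintro (i | i) (j | j) hij
    · simp at hij
    · obtain ⟨a, ha, hax⟩ := h i j
      exact ⟨a, ha, x j, rfl, hax⟩
    · obtain ⟨a, ha, hax⟩ := h j i
      exact ⟨x i, rfl, a, ha, hax.symm⟩
    · simp at hij

/-- `C` is the set of inner vertices of a connection between `a` and `b`, empty if the connection
is an edge. -/
def IsLink (G : SimpleGraph V) (C : Set V) (a b : V) : Prop :=
  (C = ∅ ∧ G.Adj a b) ∨ ((G.induce C).Connected ∧ Touches G C a ∧ Touches G C b)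

namespace IsLink

lemma symm (h : IsLink G C a b) : IsLink G C b a :=
  h.imp (And.imp_right SimpleGraph.Adj.symm) fun ⟨hC, ha, hb⟩ => ⟨hC, hb, ha⟩

lemma connected_insert (h : IsLink G C a b) : (G.induce (insert a C)).Connected := by
  rcases h with ⟨rfl, -⟩ | ⟨hC, ha, -⟩
  · rw [insert_empty_eq]
    exact connected_induce_singleton
  · exact ha.connected_induce_insert hC.preconnected

lemma touches_insert (h : IsLink G C a b) : Touches G (insert a C) b := by
  rcases h with ⟨-, hab⟩ | ⟨-, -, hb⟩
  · exact ⟨a, Set.mem_insert a C, hab⟩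
  · exact hb.mono (Set.subset_insert a C)

lemma linked_insert (h : IsLink G C a b) (hCD : Disjoint (insert a C) (insert b D)) :
    Linked G (insert a C) (insert b D) :=
  h.touches_insert.linked hCD (Set.mem_insert b D)

lemma connected_union (h : IsLink G C a b) (h' : IsLink G D b c) (hCD : ¬Disjoint C D) :
    (G.induce (C ∪ D)).Connected ∧
      Touches G (C ∪ D) a ∧ Touches G (C ∪ D) b ∧ Touches G (C ∪ D) c := by
  rcases h with ⟨rfl, -⟩ | ⟨hC, ha, hb⟩
  · exact absurd (Set.empty_disjoint D) hCD
  rcases h' with ⟨rfl, -⟩ | ⟨hD, -, hc⟩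
  · exact absurd (Set.disjoint_empty C) hCD
  exact ⟨SimpleGraph.induce_union_connected hC.preconnected hD.preconnected
    (Set.not_disjoint_iff_nonempty_inter.1 hCD), ha.mono Set.subset_union_left,
    hb.mono Set.subset_union_left, hc.mono Set.subset_union_right⟩

end IsLink

lemma exists_isLink (hT : (G.induce T).Preconnected) (ha : a ∈ T) (hb : b ∈ T) (hab : a ≠ b) :
    ∃ C ⊆ T \ {a, b}, IsLink G C a b := by
  obtain ⟨p, hp⟩ := hT.exists_isPath ⟨a, ha⟩ ⟨b, hb⟩
  obtain ⟨p, hpT, hp⟩ : ∃ p : G.Walk a b, (∀ u ∈ p.support, u ∈ T) ∧ p.IsPath :=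
    ⟨p.map (SimpleGraph.Embedding.induce T).toHom, fun u hu => by
      obtain ⟨t, -, rfl⟩ := List.mem_map.1 (p.support_map _ ▸ hu)
      exact t.2, hp.map Subtype.val_injective⟩
  cases p with
  | nil => exact absurd rfl hab
  | cons hac q =>
    obtain ⟨hq, haq⟩ := (SimpleGraph.Walk.cons_isPath_iff _ _).1 hp
    by_cases hnil : q.Nil
    · obtain rfl := hnil.eq
      exact ⟨∅, Set.empty_subset _, .inl ⟨rfl, hac⟩⟩
    have hsupport : q.support = q.dropLast.support ++ [b] :=
      (SimpleGraph.Walk.support_dropLast_concat hnil).symm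
    have hbq : b ∉ q.dropLast.support := by
      have := hq.support_nodup
      grind
    refine ⟨{u | u ∈ q.dropLast.support}, fun u hu => ⟨hpT u ?_, ?_⟩,
      .inr ⟨q.dropLast.connected_induce_support,
        ⟨_, q.dropLast.start_mem_support, hac.symm⟩,
        ⟨_, q.dropLast.end_mem_support, SimpleGraph.Walk.adj_penultimate hnil⟩⟩⟩
    · grind [SimpleGraph.Walk.support_cons]
    · grind

/-- Two of the three links between `a`, `b` and `c` either intersect, and form a claw, or all
three are disjoint, and form a triangle. -/
lemma exists_claw_or_triangle (ha : a ∈ T) (hb : b ∈ T) (hc : c ∈ T)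
    (hab : a ≠ b) (hac : a ≠ c) (hbc : b ≠ c) (hTa : (G.induce (T \ {a})).Preconnected)
    (hTb : (G.induce (T \ {b})).Preconnected) (hTc : (G.induce (T \ {c})).Preconnected) :
    (∃ C ⊆ T \ {a, b, c}, (G.induce C).Connected ∧
      Touches G C a ∧ Touches G C b ∧ Touches G C c) ∨
    ∃ A ⊆ T, ∃ B ⊆ T, ∃ C ⊆ T, (a ∈ A ∧ b ∈ B ∧ c ∈ C) ∧
      ((G.induce A).Connected ∧ (G.induce B).Connected ∧ (G.induce C).Connected) ∧
      Linked G A B ∧ Linked G A C ∧ Linked G B C := by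
  obtain ⟨P, hP, linkP⟩ := exists_isLink hTc ⟨ha, hac⟩ ⟨hb, hbc⟩ hab
  obtain ⟨Q, hQ, linkQ⟩ := exists_isLink hTa ⟨hb, hab.symm⟩ ⟨hc, hac.symm⟩ hbc
  obtain ⟨R, hR, linkR⟩ := exists_isLink hTb ⟨hc, hbc.symm⟩ ⟨ha, hab⟩ hac.symm
  by_cases hPQ : Disjoint P Q
  · by_cases hQR : Disjoint Q R
    · by_cases hRP : Disjoint R P
      · right
        refine ⟨insert a P, ?_, insert b Q, ?_, insert c R, ?_, ⟨.inl rfl, .inl rfl, .inl rfl⟩,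
          ⟨linkP.connected_insert, linkQ.connected_insert, linkR.connected_insert⟩,
          linkP.linked_insert ?_, (linkR.linked_insert ?_).symm, linkQ.linked_insert ?_⟩
        all_goals grind
      · obtain ⟨h, hc, ha, hb⟩ := linkR.connected_union linkP hRP
        exact .inl ⟨R ∪ P, by grind, h, ha, hb, hc⟩
    · obtain ⟨h, hb, hc, ha⟩ := linkQ.connected_union linkR hQR
      exact .inl ⟨Q ∪ R, by grind, h, ha, hb, hc⟩
  · obtain ⟨h, ha, hb, hc⟩ := linkP.connected_union linkQ hPQ
    exact .inl ⟨P ∪ Q, by grind, h, ha, hb, hc⟩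

end Linked

section Boundary

variable {V : Type*} {G : SimpleGraph V} {A B C S S' Z R : Set V} {a b c u v w : V}

/-- The vertices of `S` on the face that contains the connected set `Z`, if `S` is thought of as a
part of the plane outside `Z`. -/
def boundary (G : SimpleGraph V) (S Z : Set V) : Set V :=
  {a ∈ S | Touches G Z a}

lemma boundary_empty_right : boundary G S ∅ = ∅ :=
  Set.eq_empty_of_forall_notMem fun _ ⟨_, _, hc, _⟩ => hc

lemma boundary_inter_subset : boundary G S Z ∩ S' ⊆ boundary G S' Z :=
  fun _ ha => ⟨ha.2, ha.1.2⟩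

lemma boundary_sdiff_singleton_subset :
    boundary G S Z \ {v} ⊆ boundary G (S \ {v}) (insert v Z) :=
  fun _ ha => ⟨⟨ha.1.1, ha.2⟩, ha.1.2.mono (Set.subset_insert v Z)⟩

lemma mem_boundary_sdiff_singleton (hu : u ∈ S) (hvu : G.Adj v u) :
    u ∈ boundary G (S \ {v}) (insert v Z) :=
  ⟨⟨hu, hvu.ne'⟩, v, Set.mem_insert v Z, hvu⟩

lemma preconnected_induce_insert_of_mem_boundary (hv : v ∈ boundary G S Z)
    (hZ : (G.induce Z).Preconnected) : (G.induce (insert v Z)).Preconnected :=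
  (hv.2.connected_induce_insert hZ).preconnected

lemma isMinor_completeBipartiteGraph_of_claw {x : Fin 3 → V} (hx : Function.Injective x)
    (hZ : (G.induce Z).Connected) (hC : (G.induce C).Connected) (hCZ : Disjoint C Z)
    (hvZ : v ∉ Z) (hvC : v ∉ C) (hxZ : ∀ j, x j ∉ Z) (hxC : ∀ j, x j ∉ C)
    (hZx : ∀ j, Touches G Z (x j)) (hCx : ∀ j, Touches G C (x j)) (hvx : ∀ j, G.Adj v (x j)) :
    (completeBipartiteGraph (Fin 3) (Fin 3)).IsMinor G := by
  refine isMinor_completeBipartiteGraph_of_touches ![Z, {v}, C] ?_ ?_ hx ?_ ?_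
  · simp [Fin.forall_fin_succ, hZ, hC]
  · refine (pairwise_disjoint_on _).2 ?_
    simp [Fin.forall_fin_succ, hCZ.symm, hvZ, hvC]
  · refine Fin.forall_fin_succ.2 ⟨hxZ, Fin.forall_fin_succ.2 ⟨?_, Fin.forall_fin_one.2 hxC⟩⟩
    exact fun j => (hvx j).ne'
  · refine Fin.forall_fin_succ.2 ⟨hZx, Fin.forall_fin_succ.2 ⟨?_, Fin.forall_fin_one.2 hCx⟩⟩
    exact fun j => ⟨v, rfl, hvx j⟩

lemma isMinor_completeGraph_of_triangle (hZ : (G.induce Z).Connected)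
    (hA : (G.induce A).Connected) (hB : (G.induce B).Connected) (hC : (G.induce C).Connected)
    (hZv : Linked G Z {v}) (hZA : Linked G Z A) (hZB : Linked G Z B) (hZC : Linked G Z C)
    (hvA : Linked G {v} A) (hvB : Linked G {v} B) (hvC : Linked G {v} C)
    (hAB : Linked G A B) (hAC : Linked G A C) (hBC : Linked G B C) :
    (SimpleGraph.completeGraph (Fin 5)).IsMinor G := by
  refine isMinor_completeGraph_of_linked ![Z, {v}, A, B, C] ?_ ?_
  · simp [Fin.forall_fin_succ, hZ, hA, hB, hC]
  · simp [Fin.forall_fin_succ, *]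

lemma not_isPlanar_of_adj_boundary (hZ : (G.induce Z).Preconnected) (hSZ : Disjoint S Z)
    (hS : ∀ u ∈ boundary G S Z, ∀ w ∈ boundary G S Z, G.Adj u w →
      (G.induce (S \ {u, w})).Preconnected)
    (hv : v ∈ boundary G S Z) (ha : a ∈ boundary G S Z) (hb : b ∈ boundary G S Z)
    (hc : c ∈ boundary G S Z) (hva : G.Adj v a) (hvb : G.Adj v b) (hvc : G.Adj v c)
    (hab : a ≠ b) (hac : a ≠ c) (hbc : b ≠ c) : ¬G.IsPlanar := by
  have hS' {t : V} (ht : t ∈ boundary G S Z) (hvt : G.Adj v t) :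
      (G.induce ((S \ {v}) \ {t})).Preconnected :=
    sdiff_sdiff (α := Set V) .. ▸ hS v hv t ht hvt
  have hZ : (G.induce Z).Connected :=
    let ⟨z, hz, _⟩ := hv.2
    have : Nonempty Z := ⟨⟨z, hz⟩⟩
    ⟨hZ⟩
  have hvZ : v ∉ Z := hSZ.notMem_of_mem_left hv.1
  rintro ⟨hK₅, hK₃₃⟩
  rcases exists_claw_or_triangle (T := S \ {v}) ⟨ha.1, hva.ne'⟩ ⟨hb.1, hvb.ne'⟩ ⟨hc.1, hvc.ne'⟩
      hab hac hbc (hS' ha hva) (hS' hb hvb) (hS' hc hvc) with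
    ⟨C, hCS, hC, hCa, hCb, hCc⟩ |
    ⟨A, hAS, B, hBS, C, hCS, ⟨haA, hbB, hcC⟩, ⟨hA, hB, hC⟩, hAB, hAC, hBC⟩
  · refine hK₃₃ (isMinor_completeBipartiteGraph_of_claw (x := ![a, b, c]) ?_ hZ hC
      (hSZ.mono_left fun t ht => (hCS ht).1.1) hvZ (fun h => (hCS h).1.2 rfl) ?_ ?_ ?_ ?_ ?_)
    · simp [Function.Injective, Fin.forall_fin_succ, hab, hac, hbc, hab.symm, hac.symm, hbc.symm]
    · simp [Fin.forall_fin_succ, hSZ.notMem_of_mem_left ha.1, hSZ.notMem_of_mem_left hb.1,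
        hSZ.notMem_of_mem_left hc.1]
    · have haC : a ∉ C := fun h => (hCS h).2 (by simp)
      have hbC : b ∉ C := fun h => (hCS h).2 (by simp)
      have hcC : c ∉ C := fun h => (hCS h).2 (by simp)
      simp [Fin.forall_fin_succ, haC, hbC, hcC]
    · simp [Fin.forall_fin_succ, ha.2, hb.2, hc.2]
    · simp [Fin.forall_fin_succ, hCa, hCb, hCc]
    · simp [Fin.forall_fin_succ, hva, hvb, hvc]
  · have linkZ {D : Set V} {t : V} (hD : D ⊆ S \ {v}) (ht : t ∈ D) (htZ : t ∈ boundary G S Z) :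
        Linked G Z D := htZ.2.linked (hSZ.symm.mono_right (hD.trans Set.sdiff_subset)) ht
    have linkv {D : Set V} {t : V} (hD : D ⊆ S \ {v}) (ht : t ∈ D) (hvt : G.Adj v t) :
        Linked G {v} D :=
      ⟨Set.disjoint_singleton_left.2 fun h => (hD h).2 rfl, t, ht, v, rfl, hvt⟩
    exact hK₅ (isMinor_completeGraph_of_triangle hZ hA hB hC
      (hv.2.linked (Set.disjoint_singleton_right.2 hvZ) rfl)
      (linkZ hAS haA ha) (linkZ hBS hbB hb) (linkZ hCS hcC hc)
      (linkv hAS haA hva) (linkv hBS hbB hvb) (linkv hCS hcC hvc) hAB hAC hBC)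

/-- The graph of the edges of `G` inside `S`, apart from those inside `R`. -/
def relInduce (G : SimpleGraph V) (S R : Set V) : SimpleGraph V where
  Adj a b := G.Adj a b ∧ a ∈ S ∧ b ∈ S ∧ ¬(a ∈ R ∧ b ∈ R)
  symm := ⟨fun _ _ ⟨hab, ha, hb, hR⟩ => ⟨hab.symm, hb, ha, mt And.symm hR⟩⟩
  loopless := ⟨fun _ h => h.1.ne rfl⟩

lemma relInduce_adj : (relInduce G S R).Adj a b ↔ G.Adj a b ∧ a ∈ S ∧ b ∈ S ∧ ¬(a ∈ R ∧ b ∈ R) :=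
  .rfl

lemma relInduce_univ_empty : relInduce G .univ ∅ = G := by
  ext a b
  simp [relInduce_adj]

lemma relInduce_empty_left : relInduce G ∅ R = ⊥ := by
  ext a b
  simp [relInduce_adj]

lemma relInduce_singleton : relInduce G S {v} = relInduce G S ∅ := by
  ext a b
  grind [relInduce_adj, SimpleGraph.Adj.ne]

lemma relInduce_deleteIncidenceSet :
    (relInduce G S R).deleteIncidenceSet v = relInduce G (S \ {v}) (R \ {v}) := by
  ext a b
  grind [relInduce_adj, SimpleGraph.deleteIncidenceSet_adj]

lemma support_relInduce_subset : (relInduce G S R).support ⊆ S :=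
  fun _ ⟨_, hab⟩ => hab.2.1

lemma exists_separation (h : ¬(G.induce S).Preconnected) :
    ∃ X Y, X.Nonempty ∧ Y.Nonempty ∧ Disjoint X Y ∧ X ∪ Y = S ∧ ∀ a ∈ X, ∀ b ∈ Y, ¬G.Adj a b := by
  simp only [SimpleGraph.Preconnected, not_forall] at h
  obtain ⟨x, y, hxy⟩ := h
  let X : Set S := {z | (G.induce S).Reachable x z}
  refine ⟨(↑) '' X, (↑) '' Xᶜ, ⟨x, x, .rfl, rfl⟩, ⟨y, y, hxy, rfl⟩,
    (Set.disjoint_image_iff Subtype.val_injective).2 disjoint_compl_right, ?_, ?_⟩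
  · rw [← Set.image_union, Set.union_compl_self, Set.image_univ, Subtype.range_coe]
  · rintro _ ⟨a, ha, rfl⟩ _ ⟨b, hb, rfl⟩ hab
    exact hb (SimpleGraph.Reachable.trans ha (SimpleGraph.Adj.reachable hab))

end Boundary

section Induction

variable {V F : Type*} [CommSemiring F] {G : SimpleGraph V} {P R S X Y Z : Set V} {v w x : V}

/-- The induction hypothesis on `S`: for every connected set `Z` outside `S` and every clique `R`
of vertices that `Z` touches, the edges within `S` but not within `R` have a nice matching. -/
def NiceOn (F : Type*) [CommSemiring F] (G : SimpleGraph V) (S : Set V) : Prop :=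
  ∀ ⦃Z R⦄, (G.induce Z).Preconnected → Disjoint S Z → R ⊆ boundary G S Z → G.IsClique R →
    HasNice F (relInduce G S R) (boundary G S Z) R

lemma relInduce_union_union (hXY : Disjoint X Y)
    (hadj : ∀ a ∈ X, ∀ b ∈ Y, ¬G.Adj a b) (hR : R ⊆ X ∪ P) :
    relInduce G (X ∪ Y ∪ P) R = relInduce G (X ∪ P) R ⊔ relInduce G (Y ∪ P) P := by
  ext a b
  have := hadj a
  have := hadj b
  have := G.adj_comm a b
  simp only [SimpleGraph.sup_adj, relInduce_adj]
  grind

lemma HasNice.relInduce_union [Finite V] [NoZeroDivisors F] (hXY : Disjoint X Y)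
    (hadj : ∀ a ∈ X, ∀ b ∈ Y, ¬G.Adj a b) (hR : R ⊆ X ∪ P)
    (h₁ : HasNice F (relInduce G (X ∪ P) R) (boundary G (X ∪ P) Z) R)
    (h₂ : HasNice F (relInduce G (Y ∪ P) P) (boundary G (Y ∪ P) Z) P) :
    HasNice F (relInduce G (X ∪ Y ∪ P) R) (boundary G (X ∪ Y ∪ P) Z) R := by
  rw [relInduce_union_union hXY hadj hR]
  have h₁S : (relInduce G (X ∪ P) R).support ⊆ X ∪ P := support_relInduce_subset
  have h₂S : (relInduce G (Y ∪ P) P).support ⊆ Y ∪ P := support_relInduce_subset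
  have hinter : (X ∪ P) ∩ (Y ∪ P) = P := by
    rw [← Set.inter_union_distrib_right, hXY.inter_eq, Set.empty_union]
  refine h₁.sup h₂ ?_ ?_ ?_ ((Set.inter_subset_inter_right _ h₁S).trans boundary_inter_subset)
    ((Set.inter_subset_inter_right _ h₂S).trans boundary_inter_subset)
  · rw [SimpleGraph.disjoint_left]
    intro a b hab hab'
    have ha : a ∈ P := hinter.subset ⟨hab.2.1, hab'.2.1⟩
    have hb : b ∈ P := hinter.subset ⟨hab.2.2.1, hab'.2.2.1⟩
    exact hab'.2.2.2 ⟨ha, hb⟩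
  · exact (Set.inter_subset_inter h₁S h₂S).trans hinter.subset
  · exact (Set.inter_subset_inter hR h₂S).trans hinter.subset

lemma NiceOn.hasNice_union_of_not_adj [Finite V] [NoZeroDivisors F] (hZ : (G.induce Z).Preconnected)
    (hSZ : Disjoint (X ∪ Y ∪ P) Z) (hRB : R ⊆ boundary G (X ∪ Y ∪ P) Z) (hR : G.IsClique R)
    (hPB : P ⊆ boundary G (X ∪ Y ∪ P) Z) (hP : G.IsClique P)
    (hXY : Disjoint X Y) (hadj : ∀ a ∈ X, ∀ b ∈ Y, ¬G.Adj a b)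
    (h₁ : NiceOn F G (X ∪ P)) (h₂ : NiceOn F G (Y ∪ P)) :
    HasNice F (relInduce G (X ∪ Y ∪ P) R) (boundary G (X ∪ Y ∪ P) Z) R := by
  wlog hRX : R ⊆ X ∪ P generalizing X Y
  · obtain ⟨y, hyR, hy⟩ := Set.not_subset.1 hRX
    have hRY : R ⊆ Y ∪ P := fun r hr => by
      have := @hR _ hr _ hyR
      have := hRB hr
      have := hRB hyR
      grind [boundary]
    rw [Set.union_comm X Y] at hSZ hRB hPB ⊢
    exact this hSZ hRB hPB hXY.symm (fun a ha b hb hab => hadj b hb a ha hab.symm) h₂ h₁ hRY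
  have hXPS : X ∪ P ⊆ X ∪ Y ∪ P := Set.union_subset_union_left P Set.subset_union_left
  have hYPS : Y ∪ P ⊆ X ∪ Y ∪ P := Set.union_subset_union_left P Set.subset_union_right
  exact HasNice.relInduce_union hXY hadj hRX
    (h₁ hZ (hSZ.mono_left hXPS) (fun r hr => ⟨hRX hr, (hRB hr).2⟩) hR)
    (h₂ hZ (hSZ.mono_left hYPS) (fun p hp => ⟨.inr hp, (hPB hp).2⟩) hP)

lemma NiceOn.hasNice_deleteIncidenceSet (h : NiceOn F G (S \ {v}))
    (hvZ : (G.induce (insert v Z)).Preconnected) (hSZ : Disjoint S Z)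
    (hRB : R ⊆ boundary G S Z) (hR : G.IsClique R) :
    HasNice F ((relInduce G S R).deleteIncidenceSet v) (boundary G (S \ {v}) (insert v Z))
      (R \ {v}) := by
  rw [relInduce_deleteIncidenceSet]
  refine h hvZ ?_ ((Set.sdiff_subset_sdiff_left hRB).trans boundary_sdiff_singleton_subset)
    (hR.subset Set.sdiff_subset)
  rw [Set.disjoint_insert_right]
  exact ⟨fun hv => hv.2 rfl, hSZ.mono_left Set.sdiff_subset⟩

lemma NiceOn.hasNice_of_adj_boundary_mem_root [Finite V] (h : NiceOn F G (S \ {v}))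
    (hvZ : (G.induce (insert v Z)).Preconnected) (hSZ : Disjoint S Z)
    (hRB : R ⊆ boundary G S Z) (hR : G.IsClique R)
    (hvR : ∀ u ∈ boundary G S Z, G.Adj v u → u ∈ R)
    (hxw : v ∉ R → ∀ u ∈ boundary G S Z, G.Adj v u → u = x ∨ u = w) :
    HasNice F (relInduce G S R) (boundary G S Z) R := by
  classical
  let N := (relInduce G S R).neighborSet v
  have hNK (u) (hu : u ∈ (N ∩ boundary G S Z).toFinite.toFinset) : u ∈ R ∧ v ∉ R := by
    obtain ⟨⟨hvu, -, -, hvuR⟩, huB⟩ := (Set.Finite.mem_toFinset _).1 hu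
    exact ⟨hvR u huB hvu, fun hv => hvuR ⟨hv, hvR u huB hvu⟩⟩
  refine (h.hasNice_deleteIncidenceSet hvZ hSZ hRB hR).of_deleteIncidenceSet
    (U := (N \ boundary G S Z).toFinite.toFinset) (K := (N ∩ boundary G S Z).toFinite.toFinset)
    hRB boundary_sdiff_singleton_subset (fun u => ?_) (fun u hu => ?_) (fun u hu => (hNK u hu).1)
    (fun hv => eq_empty_of_forall_notMem fun u hu => (hNK u hu).2 hv) ?_
  · simp only [Set.Finite.mem_toFinset, Set.mem_sdiff, Set.mem_inter_iff, N,
      SimpleGraph.mem_neighborSet]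
    tauto
  · obtain ⟨⟨hvu, -, hu, -⟩, huB⟩ := (Set.Finite.mem_toFinset _).1 hu
    exact ⟨huB, mem_boundary_sdiff_singleton hu hvu⟩
  · refine (card_le_card fun u hu => ?_).trans (card_le_two (a := x) (b := w))
    obtain ⟨⟨hvu, -⟩, huB⟩ := (Set.Finite.mem_toFinset _).1 hu
    simpa using hxw (hNK u hu).2 u huB hvu

lemma NiceOn.hasNice_of_adj_root [Finite V] (h : NiceOn F G (S \ {v}))
    (hvZ : (G.induce (insert v Z)).Preconnected) (hSZ : Disjoint S Z)
    (hRB : R ⊆ boundary G S Z) (hR : G.IsClique R) (hv : v ∈ S \ R) (hx : x ∈ R)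
    (hvx : G.Adj v x) (hxw : ∀ u ∈ boundary G S Z, G.Adj v u → u = x ∨ u = w) :
    HasNice F (relInduce G S R) (boundary G S Z) R := by
  by_cases hvR : ∀ u ∈ boundary G S Z, G.Adj v u → u ∈ R
  · exact h.hasNice_of_adj_boundary_mem_root hvZ hSZ hRB hR hvR fun _ => hxw
  push Not at hvR
  obtain ⟨u, huB, hvu, huR⟩ := hvR
  obtain rfl : u = w := (hxw u huB hvu).resolve_left fun hux => huR (hux ▸ hx)
  refine (h.hasNice_deleteIncidenceSet hvZ hSZ hRB hR).of_deleteIncidenceSet_of_root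
    (U := ((G.neighborSet v ∩ S) \ boundary G S Z).toFinite.toFinset)
    hRB boundary_sdiff_singleton_subset (fun t => ?_) (fun t ht => ?_) hx huB huR hv.2
  · have hxS : x ∈ S := (hRB hx).1
    simp only [Set.Finite.mem_toFinset, relInduce_adj, Set.mem_sdiff, Set.mem_inter_iff,
      SimpleGraph.mem_neighborSet]
    grind [huB.1]
  · obtain ⟨⟨hvt, htS⟩, htB⟩ := (Set.Finite.mem_toFinset _).1 ht
    exact ⟨htB, mem_boundary_sdiff_singleton htS hvt⟩

lemma exists_forall_adj_boundary (hG : G.IsPlanar) (hZ : (G.induce Z).Preconnected)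
    (hSZ : Disjoint S Z) (hS : ∀ u ∈ boundary G S Z, ∀ w ∈ boundary G S Z, G.Adj u w →
      (G.induce (S \ {u, w})).Preconnected)
    (hv : v ∈ boundary G S Z) (hx : x ∈ boundary G S Z) (hvx : G.Adj v x) :
    ∃ w, ∀ u ∈ boundary G S Z, G.Adj v u → u = x ∨ u = w := by
  by_contra! h
  obtain ⟨a, ha, hva, hax, -⟩ := h x
  obtain ⟨b, hb, hvb, hbx, hba⟩ := h a
  exact not_isPlanar_of_adj_boundary hZ hSZ hS hv hx ha hb hvx hva hvb hax.symm hbx.symm hba.symm hG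

lemma hasNice_of_root [Finite V] (hG : G.IsPlanar) (h : ∀ T ⊂ S, NiceOn F G T)
    (hZ : (G.induce Z).Preconnected) (hSZ : Disjoint S Z)
    (hS : ∀ u ∈ boundary G S Z, ∀ w ∈ boundary G S Z, G.Adj u w →
      (G.induce (S \ {u, w})).Preconnected)
    (hRB : R ⊆ boundary G S Z) (hR : G.IsClique R) (hx : x ∈ R) :
    HasNice F (relInduce G S R) (boundary G S Z) R := by
  have hdelete {v : V} (hv : v ∈ boundary G S Z) :
      NiceOn F G (S \ {v}) ∧ (G.induce (insert v Z)).Preconnected :=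
    ⟨h _ (Set.sdiff_singleton_ssubset.2 hv.1), preconnected_induce_insert_of_mem_boundary hv hZ⟩
  by_cases hxR : ∀ u ∈ boundary G S Z, G.Adj x u → u ∈ R
  · obtain ⟨hx', hxZ⟩ := hdelete (hRB hx)
    exact hx'.hasNice_of_adj_boundary_mem_root (x := x) (w := x) hxZ hSZ hRB hR hxR
      fun hxR => absurd hx hxR
  · push Not at hxR
    obtain ⟨v, hv, hxv, hvR⟩ := hxR
    obtain ⟨w, hw⟩ := exists_forall_adj_boundary hG hZ hSZ hS hv (hRB hx) hxv.symm
    obtain ⟨hv', hvZ⟩ := hdelete hv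
    exact hv'.hasNice_of_adj_root hvZ hSZ hRB hR ⟨hv.1, hvR⟩ hx hxv.symm hw

lemma hasNice_of_root_of_forall_ssubset [Finite V] [NoZeroDivisors F] (hG : G.IsPlanar)
    (h : ∀ T ⊂ S, NiceOn F G T) (hZ : (G.induce Z).Preconnected) (hSZ : Disjoint S Z)
    (hRB : R ⊆ boundary G S Z) (hR : G.IsClique R) (hx : x ∈ R) :
    HasNice F (relInduce G S R) (boundary G S Z) R := by
  by_cases hS : ∀ u ∈ boundary G S Z, ∀ w ∈ boundary G S Z, G.Adj u w →
      (G.induce (S \ {u, w})).Preconnected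
  · exact hasNice_of_root hG h hZ hSZ hS hRB hR hx
  push Not at hS
  obtain ⟨u, hu, w, hw, huw, hS⟩ := hS
  obtain ⟨X, Y, ⟨x, hx⟩, ⟨y, hy⟩, hXY, hS, hadj⟩ := exists_separation hS
  have hPS : {u, w} ⊆ S := Set.pair_subset hu.1 hw.1
  obtain rfl : X ∪ Y ∪ {u, w} = S := by rw [hS, Set.sdiff_union_of_subset hPS]
  have hP : Disjoint (X ∪ Y) {u, w} := hS ▸ Set.disjoint_sdiff_left
  refine NiceOn.hasNice_union_of_not_adj hZ hSZ hRB hR (Set.pair_subset hu hw)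
    (SimpleGraph.isClique_pair.2 fun _ => huw) hXY hadj (h _ ?_) (h _ ?_)
  · exact ⟨Set.union_subset_union_left _ Set.subset_union_left, fun hsub =>
      (hsub (.inl (.inr hy))).elim (hXY.notMem_of_mem_right hy) (hP.notMem_of_mem_left (.inr hy))⟩
  · exact ⟨Set.union_subset_union_left _ Set.subset_union_right, fun hsub =>
      (hsub (.inl (.inl hx))).elim (hXY.notMem_of_mem_left hx) (hP.notMem_of_mem_left (.inl hx))⟩

lemma hasNice_empty_of_forall_ssubset [Finite V] [Nontrivial F] (h : ∀ T ⊂ S, NiceOn F G T) :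
    HasNice F (relInduce G S ∅) (boundary G S ∅) ∅ := by
  obtain rfl | ⟨t, ht⟩ := S.eq_empty_or_nonempty
  · rw [relInduce_empty_left]
    exact hasNice_bot
  · refine (h _ (Set.sdiff_singleton_ssubset.2 ht)).hasNice_of_adj_boundary_mem_root
      (x := t) (w := t) ?_ (Set.disjoint_empty S) (Set.empty_subset _) SimpleGraph.isClique_empty
      ?_ ?_
    · rw [insert_empty_eq]
      exact connected_induce_singleton.preconnected
    all_goals simp [boundary_empty_right]

lemma niceOn_of_forall_ssubset [Finite V] [NoZeroDivisors F] [Nontrivial F] (hG : G.IsPlanar)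
    (h : ∀ T ⊂ S, NiceOn F G T) : NiceOn F G S := by
  intro Z R hZ hSZ hRB hR
  obtain rfl | ⟨x, hx⟩ := R.eq_empty_or_nonempty
  · obtain hB | ⟨b, hb⟩ := (boundary G S Z).eq_empty_or_nonempty
    · rw [hB.trans boundary_empty_right.symm]
      exact hasNice_empty_of_forall_ssubset h
    · rw [← relInduce_singleton]
      exact (hasNice_of_root_of_forall_ssubset hG h hZ hSZ (Set.singleton_subset_iff.2 hb)
        (Set.pairwise_singleton b _) rfl).mono_roots (Set.empty_subset _)
  · exact hasNice_of_root_of_forall_ssubset hG h hZ hSZ hRB hR hx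

lemma niceOn [Finite V] [NoZeroDivisors F] [Nontrivial F] (hG : G.IsPlanar) (S : Set V) :
    NiceOn F G S :=
  wellFounded_lt.induction S fun _ => niceOn_of_forall_ssubset hG

end Induction

theorem stmt_11_general {V : Type*} [Finite V] (G : SimpleGraph V) (hG : G.IsPlanar) :
    ∃ M : G.Subgraph, M.IsMatching ∧ ∀ {α : Type*} (L : V → Finset α), (∀ v, 4 ≤ #(L v)) →
      ∃ φ : (G.deleteEdges M.edgeSet).Coloring α, ∀ v, φ v ∈ L v := by
  have hnice : HasNice (ZMod 2) (relInduce G .univ ∅) (boundary G .univ ∅) ∅ :=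
    niceOn hG .univ .of_subsingleton (Set.disjoint_empty _) (Set.empty_subset _)
      SimpleGraph.isClique_empty
  rw [relInduce_univ_empty] at hnice
  obtain ⟨M, d, h⟩ := hnice
  let M' : G.Subgraph :=
    { verts := M.support, Adj := M.Adj, adj_sub := fun hab => h.le hab,
      edge_vert := fun hab => ⟨_, hab⟩, symm := M.symm }
  have hM' : G.deleteEdges M'.edgeSet = G \ M := by
    ext a b
    simp [M']
  refine ⟨M', ?_, fun {α} L hL => ?_⟩
  · exact fun a ⟨b, hab⟩ => ⟨b, hab, fun c hac => h.matching hac hab⟩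
  · rw [hM']
    exact exists_coloring_of_coeff_edgePoly_ne_zero h.coeff_ne_zero L
      fun v => (Nat.lt_succ_of_le (h.le_three v)).trans_le (hL v)

/- Every planar graph contains a matching `M` such that `G - M` is 4-choosable. -/
theorem stmt_11 {V : Type*} [Fintype V] [LinearOrder V] (G : SimpleGraph V)
    (hG : G.IsPlanar) :
    ∃ M : G.Subgraph, M.IsMatching ∧
      ∀ L : V → Finset ℕ, (∀ v, (L v).card = 4) →
        ∃ φ : V → ℕ, (∀ v, φ v ∈ L v) ∧
          ∀ u v, (G.deleteEdges M.edgeSet).Adj u v → φ u ≠ φ v := by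
  obtain ⟨M, hM, h⟩ := stmt_11_general G hG
  refine ⟨M, hM, fun L hL => ?_⟩
  obtain ⟨φ, hφ⟩ := h L fun v => (hL v).ge
  exact ⟨φ, hφ, fun _ _ => φ.valid⟩
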